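/- Let ω > 0 and q > p > 1 be real numbers, let n ≥ 1 be a natural number, and let f(u) = -ω·u + u^p - u^q. Then there exists a positive solution of the boundary value problem u''(r) + ((n-1)/r)·u'(r) + f(u(r)) = 0 for r > 0, u'(0) = 0, lim_{r→∞} u(r) = 0, if and only if there exists u > 0 with F(u) > 0, where F(u) = ∫₀ᵘ f(s) ds. -/

import Mathlib

open Filter

/-- The double power nonlinearity `f(u) = -ω·u + u^p - u^q` (real powers). -/
noncomputable def f (ω p q u : ℝ) : ℝ := -ω * u + u ^ p - u ^ q

/-- `u` is a positive solution of the radial boundary value problem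
`u'' + ((n-1)/r) u' + f(u) = 0` on `(0,∞)`, `u'(0) = 0`, `u(r) → 0` as `r → ∞`:
a twice continuously differentiable positive function on `[0,∞)` satisfying the
equation, the Neumann condition at `0` and decay at infinity. -/
def IsPositiveSolution (n : ℕ) (f : ℝ → ℝ) (u : ℝ → ℝ) : Prop :=
  ContDiffOn ℝ 2 u (Set.Ici 0) ∧
  (∀ r : ℝ, 0 ≤ r → 0 < u r) ∧
  (∀ r : ℝ, 0 < r →
    iteratedDerivWithin 2 u (Set.Ici 0) r
      + ((n : ℝ) - 1) / r * derivWithin u (Set.Ici 0) r + f (u r) = 0) ∧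
  derivWithin u (Set.Ici 0) 0 = 0 ∧
  Tendsto u atTop (nhds 0)

/-!
The energy `E = u'² / 2 + F(u)` is nonincreasing along solutions, and it tends to `0` along a
decaying one, so `F(u(0)) = E(0) ≥ 0`. If `F` were nowhere positive, `u(0)` would maximise `F`,
hence be an equilibrium, and `u` would be constant.

Conversely, `f > 0` exactly on an interval `(b, c)`, `F < 0` on `(0, b]` and `F(c) > 0`. Shoot from
`u(0) = a ∈ [b, c)`. Starting at `b` the energy is negative at once. Starting close to `c` the
solution lingers near `c` until the damping `(n - 1) / r` is too weak to dissipate the energy, so it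
crosses `0`. Both behaviours are open in `a` and exclude each other, so by connectedness some `a`
shows neither. Its trajectory has nonnegative energy and stays nonnegative; it decreases forever,
because a turning point would lie in `(0, b]`, where the energy would be negative, and for the same
reason its limit is `0`.
-/

open Set Topology MeasureTheory

theorem le_mul_exp_of_deriv_le {φ φ' : ℝ → ℝ} {k a b : ℝ} (hab : a ≤ b)
    (hφ : ContinuousOn φ (Icc a b)) (hφ' : ∀ x ∈ Ioo a b, HasDerivAt φ (φ' x) x)
    (hle : ∀ x ∈ Ioo a b, φ' x ≤ k * φ x) : φ b ≤ φ a * Real.exp (k * (b - a)) := by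
  have hderiv : ∀ x ∈ Ioo a b, HasDerivAt (fun x => φ x * Real.exp (k * (b - x)))
      ((φ' x - k * φ x) * Real.exp (k * (b - x))) x := fun x hx =>
    ((hφ' x hx).mul (((hasDerivAt_id x).const_sub b).const_mul k).exp).congr_deriv
      (by simp only [id]; ring)
  have hanti : AntitoneOn (fun x => φ x * Real.exp (k * (b - x))) (Icc a b) := by
    refine antitoneOn_of_deriv_nonpos (convex_Icc a b) (hφ.mul (by fun_prop)) ?_ ?_ <;>
      rw [interior_Icc] <;> intro x hx
    · exact (hderiv x hx).differentiableAt.differentiableWithinAt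
    · rw [(hderiv x hx).deriv]
      exact mul_nonpos_of_nonpos_of_nonneg (sub_nonpos.2 (hle x hx)) (Real.exp_pos _).le
  simpa only [sub_self, mul_zero, Real.exp_zero, mul_one] using
    hanti (left_mem_Icc.2 hab) (right_mem_Icc.2 hab) hab

theorem le_mul_exp_of_neg_le_deriv {φ φ' : ℝ → ℝ} {k a b : ℝ} (hab : a ≤ b)
    (hφ : ContinuousOn φ (Icc a b)) (hφ' : ∀ x ∈ Ioo a b, HasDerivAt φ (φ' x) x)
    (hle : ∀ x ∈ Ioo a b, -(k * φ x) ≤ φ' x) : φ a ≤ φ b * Real.exp (k * (b - a)) := by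
  have hneg := le_mul_exp_of_deriv_le (k := -k) hab hφ.neg (fun x hx => (hφ' x hx).neg)
    fun x hx => by
      rw [Pi.neg_apply, neg_mul_neg, neg_le]
      exact hle x hx
  simp only [Pi.neg_apply, neg_mul, neg_le_neg_iff, Real.exp_neg] at hneg
  rwa [← div_eq_mul_inv, div_le_iff₀ (Real.exp_pos _)] at hneg

theorem exists_tendsto_of_antitoneOn_Ici {g : ℝ → ℝ} {a B : ℝ} (hg : AntitoneOn g (Ici a))
    (hB : ∀ᶠ r in atTop, B ≤ g r) : ∃ l, Tendsto g atTop (𝓝 l) := by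
  have hanti : Antitone fun r => g (max r a) := fun r s hrs =>
    hg (le_max_right r a) (le_max_right s a) (max_le_max_right a hrs)
  have heq : (fun r => g (max r a)) =ᶠ[atTop] g := by
    filter_upwards [eventually_ge_atTop a] with r hr
    rw [max_eq_left hr]
  rcases tendsto_atTop_of_antitone hanti with hbot | ⟨l, hl⟩
  · obtain ⟨r, hr, hlt⟩ := (hB.and ((hbot.congr' heq).eventually_lt_atBot B)).exists
    exact absurd hr hlt.not_ge
  · exact ⟨l, hl.congr' heq⟩

theorem exists_tendsto_deriv_zero_of_tendsto {u v : ℝ → ℝ} {l : ℝ}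
    (hu : ∀ r, 0 < r → HasDerivAt u (v r) r) (hl : Tendsto u atTop (𝓝 l)) :
    ∃ ξ : ℝ → ℝ, Tendsto ξ atTop atTop ∧ Tendsto (v ∘ ξ) atTop (𝓝 0) := by
  have hmean : ∀ r, ∃ ξ, r ≤ ξ ∧ (0 < r → v ξ = u (r + 1) - u r) := by
    intro r
    rcases le_or_gt r 0 with hr | hr
    · exact ⟨r, le_rfl, fun h => absurd h hr.not_gt⟩
    obtain ⟨ξ, hξ, hslope⟩ := exists_hasDerivAt_eq_slope u v (lt_add_one r)
      (fun x hx => (hu x (hr.trans_le hx.1)).continuousAt.continuousWithinAt)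
      (fun x hx => hu x (hr.trans hx.1))
    exact ⟨ξ, hξ.1.le, fun _ => by rw [hslope, add_sub_cancel_left, div_one]⟩
  choose ξ hle hslope using hmean
  refine ⟨ξ, tendsto_atTop_mono hle tendsto_id, ?_⟩
  have hdiff : Tendsto (fun r => u (r + 1) - u r) atTop (𝓝 0) := by
    simpa only [sub_self, Function.comp_def, id] using
      (hl.comp (tendsto_atTop_add_const_right _ 1 tendsto_id)).sub hl
  refine hdiff.congr' ?_
  filter_upwards [eventually_gt_atTop 0] with r hr using (hslope r hr).symm

/-! ### Radial trajectories and their energy -/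

theorem hasDerivAt_integral_of_continuous {h : ℝ → ℝ} (hh : Continuous h) (x : ℝ) :
    HasDerivAt (fun x => ∫ s in (0 : ℝ)..x, h s) (h x) x :=
  (hh.integral_hasStrictDerivAt 0 x).hasDerivAt

theorem continuous_integral_of_continuous {h : ℝ → ℝ} (hh : Continuous h) :
    Continuous fun x => ∫ s in (0 : ℝ)..x, h s :=
  intervalIntegral.continuous_primitive (fun _ _ => hh.intervalIntegrable _ _) 0

/-- A trajectory `(u, v) = (u, u')` on `[0, ∞)`, started at rest, of the radial equation
`u'' + (m / r) u' + h(u) = 0`; the damping coefficient `m` is the dimension minus one. -/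
structure IsRadialTrajectory (m : ℝ) (h u v : ℝ → ℝ) : Prop where
  continuousOn : ContinuousOn u (Ici 0)
  continuousOn_velocity : ContinuousOn v (Ici 0)
  hasDerivAt : ∀ r, 0 < r → HasDerivAt u (v r) r
  hasDerivAt_velocity : ∀ r, 0 < r → HasDerivAt v (-(m / r) * v r - h (u r)) r
  velocity_zero : v 0 = 0

/-- The mechanical energy `u'² / 2 + H(u)`, where `H` is the primitive of `h` vanishing at `0`. -/
noncomputable def energy (h u v : ℝ → ℝ) (r : ℝ) : ℝ := v r ^ 2 / 2 + ∫ s in (0 : ℝ)..u r, h s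

namespace IsRadialTrajectory

variable {m : ℝ} {h u v : ℝ → ℝ}

theorem const {x : ℝ} (hx : h x = 0) : IsRadialTrajectory m h (fun _ => x) (fun _ => 0) where
  continuousOn := continuousOn_const
  continuousOn_velocity := continuousOn_const
  hasDerivAt r _ := hasDerivAt_const r x
  hasDerivAt_velocity r _ := by simpa only [hx, mul_zero, sub_zero] using hasDerivAt_const r 0
  velocity_zero := rfl

theorem congr {g : ℝ → ℝ} (T : IsRadialTrajectory m h u v) (hg : ∀ r, 0 < r → h (u r) = g (u r)) :
    IsRadialTrajectory m g u v :=
  { T with hasDerivAt_velocity := fun r hr => hg r hr ▸ T.hasDerivAt_velocity r hr }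

theorem strictAntiOn (T : IsRadialTrajectory m h u v) {D : Set ℝ} (hD : Convex ℝ D)
    (hD0 : D ⊆ Ici 0) (hv : ∀ r ∈ interior D, v r < 0) : StrictAntiOn u D :=
  strictAntiOn_of_deriv_neg hD (T.continuousOn.mono hD0) fun r hr => by
    have hr0 : r ∈ Ioi (0 : ℝ) := by simpa only [interior_Ici] using interior_mono hD0 hr
    rw [(T.hasDerivAt r hr0).deriv]
    exact hv r hr

-- `r ^ m` is the integrating factor: `(r ^ m * v)' = -r ^ m * h(u)`.
theorem velocity_neg (T : IsRadialTrajectory m h u v) (hm : 0 ≤ m) {r : ℝ} (hr : 0 < r)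
    (hpos : ∀ s ∈ Ioo 0 r, 0 < h (u s)) : v r < 0 := by
  have hderiv : ∀ s ∈ Ioo 0 r, HasDerivAt (fun s => s ^ m * v s) (-(s ^ m * h (u s))) s := by
    intro s hs
    refine ((Real.hasDerivAt_rpow_const (Or.inl hs.1.ne')).mul
      (T.hasDerivAt_velocity s hs.1)).congr_deriv ?_
    rw [Real.rpow_sub_one hs.1.ne']
    ring
  have hanti : StrictAntiOn (fun s => s ^ m * v s) (Icc 0 r) := by
    refine strictAntiOn_of_deriv_neg (convex_Icc 0 r)
      ((continuousOn_id.rpow_const fun _ _ => Or.inr hm).mul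
        (T.continuousOn_velocity.mono Icc_subset_Ici_self)) fun s hs => ?_
    rw [interior_Icc] at hs
    rw [(hderiv s hs).deriv, neg_neg_iff_pos]
    exact mul_pos (Real.rpow_pos_of_pos hs.1 m) (hpos s hs)
  have hlt := hanti (left_mem_Icc.2 hr.le) (right_mem_Icc.2 hr.le) hr
  simp only [T.velocity_zero, mul_zero] at hlt
  exact (pos_iff_neg_of_mul_neg hlt).1 (Real.rpow_pos_of_pos hr m)

theorem hasDerivAt_energy (T : IsRadialTrajectory m h u v) (hh : Continuous h) {r : ℝ}
    (hr : 0 < r) : HasDerivAt (energy h u v) (-(m / r) * v r ^ 2) r :=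
  ((((T.hasDerivAt_velocity r hr).pow 2).div_const 2).add
    ((hasDerivAt_integral_of_continuous hh (u r)).comp r (T.hasDerivAt r hr))).congr_deriv
      (by push_cast; ring)

theorem continuousOn_energy (T : IsRadialTrajectory m h u v) (hh : Continuous h) :
    ContinuousOn (energy h u v) (Ici 0) :=
  ((T.continuousOn_velocity.pow 2).div_const 2).add
    ((continuous_integral_of_continuous hh).comp_continuousOn T.continuousOn)

theorem antitoneOn_energy (T : IsRadialTrajectory m h u v) (hm : 0 ≤ m) (hh : Continuous h) :
    AntitoneOn (energy h u v) (Ici 0) := by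
  have hpos : ∀ {r}, r ∈ interior (Ici (0 : ℝ)) → 0 < r := fun hr => by
    simpa only [interior_Ici, mem_Ioi] using hr
  refine antitoneOn_of_deriv_nonpos (convex_Ici 0) (T.continuousOn_energy hh)
    (fun r hr => (T.hasDerivAt_energy hh (hpos hr)).differentiableAt.differentiableWithinAt)
    fun r hr => ?_
  rw [(T.hasDerivAt_energy hh (hpos hr)).deriv]
  exact mul_nonpos_of_nonpos_of_nonneg (neg_nonpos.2 (div_nonneg hm (hpos hr).le)) (sq_nonneg _)

theorem energy_zero (T : IsRadialTrajectory m h u v) :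
    energy h u v 0 = ∫ s in (0 : ℝ)..u 0, h s := by
  simp only [energy, T.velocity_zero, ne_eq, OfNat.ofNat_ne_zero, not_false_eq_true, zero_pow,
    zero_div, zero_add]

theorem tendsto_velocity_zero (T : IsRadialTrajectory m h u v) (hm : 0 ≤ m) (hh : Continuous h)
    {l : ℝ} (hu : Tendsto u atTop (𝓝 l)) : Tendsto v atTop (𝓝 0) := by
  have hprim : Tendsto (fun r => ∫ s in (0 : ℝ)..u r, h s) atTop (𝓝 (∫ s in (0 : ℝ)..l, h s)) :=
    (continuous_integral_of_continuous hh).continuousAt.tendsto.comp hu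
  obtain ⟨e, he⟩ := exists_tendsto_of_antitoneOn_Ici (T.antitoneOn_energy hm hh)
    ((hprim.eventually (eventually_ge_nhds (sub_one_lt _))).mono fun r hr =>
      hr.trans (le_add_of_nonneg_left (by positivity)))
  have hsq : Tendsto (fun r => v r ^ 2) atTop (𝓝 (2 * (e - ∫ s in (0 : ℝ)..l, h s))) :=
    ((he.sub hprim).const_mul 2).congr fun r => by simp only [energy]; ring
  obtain ⟨ξ, hξ, hvξ⟩ := exists_tendsto_deriv_zero_of_tendsto T.hasDerivAt hu
  have hzero : 2 * (e - ∫ s in (0 : ℝ)..l, h s) = 0 := by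
    simpa using tendsto_nhds_unique (hsq.comp hξ) (hvξ.pow 2)
  rw [hzero] at hsq
  refine (tendsto_zero_iff_abs_tendsto_zero v).2 ?_
  simpa only [Function.comp_def, Real.sqrt_sq_eq_abs, Real.sqrt_zero] using hsq.sqrt

theorem tendsto_energy (T : IsRadialTrajectory m h u v) (hm : 0 ≤ m) (hh : Continuous h)
    {l : ℝ} (hu : Tendsto u atTop (𝓝 l)) :
    Tendsto (energy h u v) atTop (𝓝 (∫ s in (0 : ℝ)..l, h s)) := by
  unfold energy
  simpa [Function.comp_def] using (((T.tendsto_velocity_zero hm hh hu).pow 2).div_const 2).add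
    ((continuous_integral_of_continuous hh).continuousAt.tendsto.comp hu)

theorem integral_le_energy (T : IsRadialTrajectory m h u v) (hm : 0 ≤ m) (hh : Continuous h)
    {l r : ℝ} (hu : Tendsto u atTop (𝓝 l)) (hr : 0 ≤ r) :
    ∫ s in (0 : ℝ)..l, h s ≤ energy h u v r :=
  le_of_tendsto (T.tendsto_energy hm hh hu) <| (eventually_ge_atTop r).mono fun _ hs =>
    T.antitoneOn_energy hm hh hr (hr.trans hs) hs

theorem map_eq_zero_of_tendsto (T : IsRadialTrajectory m h u v) (hm : 0 ≤ m) (hh : Continuous h)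
    {l : ℝ} (hu : Tendsto u atTop (𝓝 l)) : h l = 0 := by
  have hv := T.tendsto_velocity_zero hm hh hu
  obtain ⟨ξ, hξ, hw⟩ := exists_tendsto_deriv_zero_of_tendsto T.hasDerivAt_velocity hv
  have hacc : Tendsto (fun r => -(m / r) * v r - h (u r)) atTop (𝓝 (-h l)) := by
    simpa using ((tendsto_const_nhds.div_atTop tendsto_id).neg.mul hv).sub
      (hh.continuousAt.tendsto.comp hu)
  exact neg_eq_zero.1 (tendsto_nhds_unique (hacc.comp hξ) hw)

-- The energy dissipated on `[R, r]` is `∫ (m / s) v² ≤ (m / R) V ∫ |v|`, and `∫ |v| = u R - u r`.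
theorem energy_sub_le (T : IsRadialTrajectory m h u v) (hm : 0 ≤ m) (hh : Continuous h)
    {R r V : ℝ} (hR : 0 < R) (hRr : R ≤ r) (hv : ∀ s ∈ Ioo R r, -V ≤ v s ∧ v s ≤ 0) :
    energy h u v R - m / R * V * (u R - u r) ≤ energy h u v r := by
  have hderiv : ∀ s, 0 < s → HasDerivAt (fun s => energy h u v s - m / R * V * u s)
      (-(m / s) * v s ^ 2 - m / R * V * v s) s := fun s hs =>
    (T.hasDerivAt_energy hh hs).sub ((T.hasDerivAt s hs).const_mul _)
  have hmono : MonotoneOn (fun s => energy h u v s - m / R * V * u s) (Icc R r) := by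
    refine monotoneOn_of_deriv_nonneg (convex_Icc R r)
      (fun s hs => (hderiv s (hR.trans_le hs.1)).continuousAt.continuousWithinAt) ?_ ?_
    all_goals
      intro s hs
      rw [interior_Icc] at hs
      have hs0 : 0 < s := hR.trans hs.1
    · exact (hderiv s hs0).differentiableAt.differentiableWithinAt
    · obtain ⟨hVv, hv0⟩ := hv s hs
      rw [(hderiv s hs0).deriv]
      calc (0 : ℝ) ≤ m / s * (-v s * (v s + V)) + (m / R - m / s) * (V * -v s) :=
            add_nonneg
              (mul_nonneg (div_nonneg hm hs0.le) (mul_nonneg (neg_nonneg.2 hv0) (by linarith)))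
              (mul_nonneg (sub_nonneg.2 (div_le_div_of_nonneg_left hm hR hs.1.le))
                (mul_nonneg (by linarith) (neg_nonneg.2 hv0)))
        _ = -(m / s) * v s ^ 2 - m / R * V * v s := by ring
  have := hmono (left_mem_Icc.2 hRr) (right_mem_Icc.2 hRr) hRr
  simp only at this
  linarith

theorem abs_velocity_le (T : IsRadialTrajectory m h u v) (hm : 0 ≤ m) (hh : Continuous h)
    {K r : ℝ} (hr : 0 ≤ r) (h₀ : |∫ s in (0 : ℝ)..u 0, h s| ≤ K)
    (hK : |∫ s in (0 : ℝ)..u r, h s| ≤ K) : |v r| ≤ √(4 * K) := by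
  refine Real.abs_le_sqrt ?_
  have hle := T.antitoneOn_energy hm hh self_mem_Ici hr hr
  rw [T.energy_zero, energy] at hle
  linarith [(abs_le.1 h₀).2, (abs_le.1 hK).1]

end IsRadialTrajectory

/-! ### Dependence on initial data -/

/-- The squared Euclidean distance at time `r` between two trajectories in the phase plane. -/
def phaseDistSq (u₁ v₁ u₂ v₂ : ℝ → ℝ) (r : ℝ) : ℝ := (u₁ r - u₂ r) ^ 2 + (v₁ r - v₂ r) ^ 2

theorem phaseDistSq_nonneg (u₁ v₁ u₂ v₂ : ℝ → ℝ) (r : ℝ) : 0 ≤ phaseDistSq u₁ v₁ u₂ v₂ r := by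
  unfold phaseDistSq
  positivity

theorem phaseDistSq_eq_zero_iff {u₁ v₁ u₂ v₂ : ℝ → ℝ} {r : ℝ} :
    phaseDistSq u₁ v₁ u₂ v₂ r = 0 ↔ u₁ r = u₂ r ∧ v₁ r = v₂ r := by
  rw [phaseDistSq, add_eq_zero_iff_of_nonneg (sq_nonneg _) (sq_nonneg _), sq_eq_zero_iff,
    sq_eq_zero_iff, sub_eq_zero, sub_eq_zero]

theorem abs_two_mul_sub_le {L x y δ : ℝ} (hL : 0 ≤ L) (hδ : |δ| ≤ L * |x|) :
    |2 * (x * y - y * δ)| ≤ (1 + L) * (x ^ 2 + y ^ 2) :=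
  calc |2 * (x * y - y * δ)| = 2 * |y| * |x - δ| := by
        rw [← mul_comm y x, ← mul_sub, abs_mul, abs_mul, abs_two, mul_assoc]
    _ ≤ 2 * |y| * ((1 + L) * |x|) := by
        gcongr
        linarith [abs_sub x δ]
    _ = (1 + L) * (2 * |x| * |y|) := by ring
    _ ≤ (1 + L) * (x ^ 2 + y ^ 2) := by
        rw [← sq_abs x, ← sq_abs y]
        gcongr
        exact two_mul_le_add_sq _ _

namespace IsRadialTrajectory

variable {m : ℝ} {h u v u₁ v₁ u₂ v₂ : ℝ → ℝ} {s t : ℝ} {K : Set ℝ} {L : NNReal}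

theorem continuousOn_phaseDistSq (T₁ : IsRadialTrajectory m h u₁ v₁)
    (T₂ : IsRadialTrajectory m h u₂ v₂) : ContinuousOn (phaseDistSq u₁ v₁ u₂ v₂) (Ici 0) :=
  ((T₁.continuousOn.sub T₂.continuousOn).pow 2).add
    ((T₁.continuousOn_velocity.sub T₂.continuousOn_velocity).pow 2)

theorem hasDerivAt_phaseDistSq (T₁ : IsRadialTrajectory m h u₁ v₁)
    (T₂ : IsRadialTrajectory m h u₂ v₂) {r : ℝ} (hr : 0 < r) :
    HasDerivAt (phaseDistSq u₁ v₁ u₂ v₂)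
      (2 * ((u₁ r - u₂ r) * (v₁ r - v₂ r) - (v₁ r - v₂ r) * (h (u₁ r) - h (u₂ r)))
        - 2 * (m / r) * (v₁ r - v₂ r) ^ 2) r :=
  ((((T₁.hasDerivAt r hr).sub (T₂.hasDerivAt r hr)).pow 2).add
    (((T₁.hasDerivAt_velocity r hr).sub (T₂.hasDerivAt_velocity r hr)).pow 2)).congr_deriv
      (by simp only [Pi.sub_apply]; push_cast; ring)

theorem abs_undamped_deriv_phaseDistSq_le (hK : LipschitzOnWith L h K) {r : ℝ} (h₁ : u₁ r ∈ K)
    (h₂ : u₂ r ∈ K) :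
    |2 * ((u₁ r - u₂ r) * (v₁ r - v₂ r) - (v₁ r - v₂ r) * (h (u₁ r) - h (u₂ r)))|
      ≤ (1 + L) * phaseDistSq u₁ v₁ u₂ v₂ r :=
  abs_two_mul_sub_le L.coe_nonneg (by simpa only [Real.dist_eq] using hK.dist_le_mul _ h₁ _ h₂)

theorem phaseDistSq_le_mul_exp (T₁ : IsRadialTrajectory m h u₁ v₁)
    (T₂ : IsRadialTrajectory m h u₂ v₂) (hm : 0 ≤ m) (hK : LipschitzOnWith L h K) (hs : 0 ≤ s)
    (hst : s ≤ t) (h₁ : MapsTo u₁ (Icc s t) K) (h₂ : MapsTo u₂ (Icc s t) K) :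
    phaseDistSq u₁ v₁ u₂ v₂ t ≤ phaseDistSq u₁ v₁ u₂ v₂ s * Real.exp ((1 + L) * (t - s)) := by
  refine le_mul_exp_of_deriv_le hst
    ((T₁.continuousOn_phaseDistSq T₂).mono (Icc_subset_Ici_self.trans (Ici_subset_Ici.2 hs)))
    (fun r hr => T₁.hasDerivAt_phaseDistSq T₂ (hs.trans_lt hr.1)) fun r hr => ?_
  have hr' := Ioo_subset_Icc_self hr
  have hbound := abs_le.1
    (abs_undamped_deriv_phaseDistSq_le hK (h₁ hr') (h₂ hr') (v₁ := v₁) (v₂ := v₂))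
  have hdamp : 0 ≤ m / r * (v₁ r - v₂ r) ^ 2 :=
    mul_nonneg (div_nonneg hm (hs.trans hr.1.le)) (sq_nonneg _)
  linarith

theorem phaseDistSq_le_mul_exp_backward (T₁ : IsRadialTrajectory m h u₁ v₁)
    (T₂ : IsRadialTrajectory m h u₂ v₂) (hm : 0 ≤ m) (hK : LipschitzOnWith L h K) (hs : 0 < s)
    (hst : s ≤ t) (h₁ : MapsTo u₁ (Icc s t) K) (h₂ : MapsTo u₂ (Icc s t) K) :
    phaseDistSq u₁ v₁ u₂ v₂ s
      ≤ phaseDistSq u₁ v₁ u₂ v₂ t * Real.exp ((1 + L + 2 * (m / s)) * (t - s)) := by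
  refine le_mul_exp_of_neg_le_deriv hst
    ((T₁.continuousOn_phaseDistSq T₂).mono (Icc_subset_Ici_self.trans (Ici_subset_Ici.2 hs.le)))
    (fun r hr => T₁.hasDerivAt_phaseDistSq T₂ (hs.trans hr.1)) fun r hr => ?_
  have hr' := Ioo_subset_Icc_self hr
  have hbound := abs_le.1
    (abs_undamped_deriv_phaseDistSq_le hK (h₁ hr') (h₂ hr') (v₁ := v₁) (v₂ := v₂))
  have hdamp : m / r * (v₁ r - v₂ r) ^ 2 ≤ m / s * phaseDistSq u₁ v₁ u₂ v₂ r :=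
    mul_le_mul (div_le_div_of_nonneg_left hm hs hr.1.le) (le_add_of_nonneg_left (sq_nonneg _))
      (sq_nonneg _) (div_nonneg hm hs.le)
  linarith

theorem exists_lipschitzOnWith_image (T : IsRadialTrajectory m h u v) (hh : LocallyLipschitz h)
    (hs : 0 ≤ s) (t : ℝ) : ∃ L, LipschitzOnWith L h (u '' Icc s t) :=
  hh.locallyLipschitzOn.exists_lipschitzOnWith_of_compact <| isCompact_Icc.image_of_continuousOn <|
    T.continuousOn.mono (Icc_subset_Ici_self.trans (Ici_subset_Ici.2 hs))

theorem eq_left_of_velocity_eq_zero (T : IsRadialTrajectory m h u v) (hm : 0 ≤ m)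
    (hh : LocallyLipschitz h) (hs : 0 ≤ s) (hst : s ≤ t) (hv : v s = 0) (hu : h (u s) = 0) :
    u t = u s := by
  obtain ⟨L, hL⟩ := T.exists_lipschitzOnWith_image hh hs t
  have hle := T.phaseDistSq_le_mul_exp (const hu) hm hL hs hst (mapsTo_image u _)
    fun _ _ => mem_image_of_mem u (left_mem_Icc.2 hst)
  have hzero : phaseDistSq u v (fun _ => u s) (fun _ => 0) s = 0 :=
    phaseDistSq_eq_zero_iff.2 ⟨rfl, hv⟩
  rw [hzero, zero_mul] at hle
  exact (phaseDistSq_eq_zero_iff.1 (hle.antisymm (phaseDistSq_nonneg ..))).1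

theorem eq_right_of_velocity_eq_zero (T : IsRadialTrajectory m h u v) (hm : 0 ≤ m)
    (hh : LocallyLipschitz h) (hs : 0 < s) (hst : s ≤ t) (hv : v t = 0) (hu : h (u t) = 0) :
    u s = u t := by
  obtain ⟨L, hL⟩ := T.exists_lipschitzOnWith_image hh hs.le t
  have hle := T.phaseDistSq_le_mul_exp_backward (const hu) hm hL hs hst (mapsTo_image u _)
    fun _ _ => mem_image_of_mem u (right_mem_Icc.2 hst)
  have hzero : phaseDistSq u v (fun _ => u t) (fun _ => 0) t = 0 :=
    phaseDistSq_eq_zero_iff.2 ⟨rfl, hv⟩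
  rw [hzero, zero_mul] at hle
  exact (phaseDistSq_eq_zero_iff.1 (hle.antisymm (phaseDistSq_nonneg ..))).1

end IsRadialTrajectory

/-! ### The initial value problem -/

/-- Up to the factor `m + 1`, the mean of the radial function `g` over the ball of radius `|s|` in
dimension `m + 1`. -/
noncomputable def radialMean (m : ℕ) (g : ℝ → ℝ) (s : ℝ) : ℝ :=
  ∫ θ in (0 : ℝ)..1, θ ^ m * g (θ * s)

/-- The solution of `φ'' + (m / r) φ' = g`, `φ(0) = φ'(0) = 0`: the radial inverse Laplacian in
dimension `m + 1`. -/
noncomputable def radialPotential (m : ℕ) (g : ℝ → ℝ) (r : ℝ) : ℝ :=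
  ∫ s in (0 : ℝ)..r, s * radialMean m g s

section RadialPotential

variable {m : ℕ} {g g₁ g₂ : ℝ → ℝ} {D k : ℝ}

theorem continuous_radialMean (hg : Continuous g) : Continuous (radialMean m g) := by
  unfold radialMean
  apply intervalIntegral.continuous_parametric_intervalIntegral_of_continuous'
  fun_prop

theorem radialMean_zero (m : ℕ) (g : ℝ → ℝ) : radialMean m g 0 = g 0 / (m + 1) := by
  simp only [radialMean, mul_zero, intervalIntegral.integral_mul_const, integral_pow, one_pow,
    ne_eq, Nat.add_eq_zero_iff, one_ne_zero, and_false, not_false_eq_true, zero_pow, sub_zero]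
  ring

theorem radialMean_sub (hg₁ : Continuous g₁) (hg₂ : Continuous g₂) (s : ℝ) :
    radialMean m (fun t => g₁ t - g₂ t) s = radialMean m g₁ s - radialMean m g₂ s := by
  unfold radialMean
  rw [← intervalIntegral.integral_sub (by apply Continuous.intervalIntegrable; fun_prop)
    (by apply Continuous.intervalIntegrable; fun_prop)]
  simp only [mul_sub]

theorem abs_radialMean_le (hk : 0 ≤ k) (hle : ∀ t, |g t| ≤ D * Real.exp (k * t ^ 2)) (s : ℝ) :
    |radialMean m g s| ≤ D * Real.exp (k * s ^ 2) := by
  have hD : 0 ≤ D := by simpa using (abs_nonneg _).trans (hle 0)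
  have hbound : ∀ θ ∈ uIoc (0 : ℝ) 1, ‖θ ^ m * g (θ * s)‖ ≤ D * Real.exp (k * s ^ 2) := by
    intro θ hθ
    rw [uIoc_of_le zero_le_one] at hθ
    rw [Real.norm_eq_abs, abs_mul, abs_of_nonneg (pow_nonneg hθ.1.le m)]
    calc θ ^ m * |g (θ * s)| ≤ |g (θ * s)| :=
          mul_le_of_le_one_left (abs_nonneg _) (pow_le_one₀ hθ.1.le hθ.2)
      _ ≤ D * Real.exp (k * (θ * s) ^ 2) := hle _
      _ ≤ D * Real.exp (k * s ^ 2) := by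
          rw [mul_pow]
          gcongr
          exact mul_le_of_le_one_left (sq_nonneg s) (pow_le_one₀ hθ.1.le hθ.2)
  simpa [radialMean] using intervalIntegral.norm_integral_le_of_norm_le_const hbound

theorem pow_mul_mul_radialMean (m : ℕ) (g : ℝ → ℝ) (s : ℝ) :
    s ^ m * (s * radialMean m g s) = ∫ t in (0 : ℝ)..s, t ^ m * g t := by
  have hsubst := intervalIntegral.mul_integral_comp_mul_right (a := 0) (b := 1)
    (f := fun t => t ^ m * g t) s
  rw [zero_mul, one_mul] at hsubst
  rw [← hsubst, mul_left_comm, radialMean, ← intervalIntegral.integral_const_mul]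
  congr 2 with θ
  ring

theorem hasDerivAt_mul_radialMean (hg : Continuous g) (s : ℝ) :
    HasDerivAt (fun s => s * radialMean m g s) (g s - m * radialMean m g s) s := by
  rcases eq_or_ne s 0 with rfl | hs
  · have hslope : HasDerivAt (fun s => s * radialMean m g s) (radialMean m g 0) 0 := by
      rw [hasDerivAt_iff_tendsto_slope]
      refine ((continuous_radialMean hg).continuousAt.mono_left nhdsWithin_le_nhds).congr' ?_
      filter_upwards [self_mem_nhdsWithin] with x hx
      rw [slope_def_field, zero_mul, sub_zero, sub_zero, mul_div_cancel_left₀ _ hx]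
    refine hslope.congr_deriv ?_
    rw [radialMean_zero]
    field_simp
    ring
  · have hpow : s ^ m ≠ 0 := pow_ne_zero m hs
    have hquot : (fun s => s * radialMean m g s) =ᶠ[𝓝 s]
        fun s => (∫ t in (0 : ℝ)..s, t ^ m * g t) / s ^ m := by
      filter_upwards [isOpen_ne.mem_nhds hs] with x hx
      rw [← pow_mul_mul_radialMean, mul_div_cancel_left₀ _ (pow_ne_zero m hx)]
    have hint := hasDerivAt_integral_of_continuous (h := fun t => t ^ m * g t) (by fun_prop) s
    refine ((hint.div (hasDerivAt_pow m s) hpow).congr_of_eventuallyEq hquot).congr_deriv ?_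
    rw [← pow_mul_mul_radialMean]
    rcases m with _ | m
    · simp
    · rw [Nat.add_sub_cancel]
      field_simp
      push_cast
      ring

theorem hasDerivAt_radialPotential (hg : Continuous g) (r : ℝ) :
    HasDerivAt (radialPotential m g) (r * radialMean m g r) r :=
  hasDerivAt_integral_of_continuous (continuous_id.mul (continuous_radialMean hg)) r

theorem radialPotential_sub (hg₁ : Continuous g₁) (hg₂ : Continuous g₂) (r : ℝ) :
    radialPotential m (fun t => g₁ t - g₂ t) r
      = radialPotential m g₁ r - radialPotential m g₂ r := by
  have hint : ∀ {g}, Continuous g → IntervalIntegrable (fun s => s * radialMean m g s) volume 0 r :=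
    fun hg => (continuous_id.mul (continuous_radialMean hg)).intervalIntegrable 0 r
  simp only [radialPotential, radialMean_sub hg₁ hg₂, mul_sub]
  exact intervalIntegral.integral_sub (hint hg₁) (hint hg₂)

theorem abs_le_of_abs_deriv_le_mul_exp {φ φ' : ℝ → ℝ} (hk : 0 < k) (hφ₀ : φ 0 = 0)
    (hφ : ∀ r, HasDerivAt φ (φ' r) r) (hle : ∀ r, |φ' r| ≤ |r| * (D * Real.exp (k * r ^ 2)))
    (r : ℝ) : |φ r| ≤ D / (2 * k) * Real.exp (k * r ^ 2) := by
  wlog hr : 0 ≤ r generalizing φ φ' r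
  · have := this (φ := fun r => φ (-r)) (φ' := fun r => -φ' (-r)) (by rwa [neg_zero])
      (fun r => ((hφ (-r)).comp r (hasDerivAt_neg r)).congr_deriv (by ring))
      (fun r => by simpa using hle (-r)) (-r) (by linarith)
    simpa only [neg_neg, neg_sq] using this
  have hD : 0 ≤ D := by
    have := (abs_nonneg _).trans (hle 1)
    rw [abs_one, one_mul] at this
    exact nonneg_of_mul_nonneg_left this (Real.exp_pos _)
  have hB : ∀ r, HasDerivAt (fun r => D / (2 * k) * Real.exp (k * r ^ 2))
      (r * (D * Real.exp (k * r ^ 2))) r := fun r =>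
    (((hasDerivAt_pow 2 r).const_mul k).exp.const_mul _).congr_deriv (by field_simp; simp)
  refine image_norm_le_of_norm_deriv_right_le_deriv_boundary (a := 0) (b := r) (f := φ)
    (fun s _ => (hφ s).continuousAt.continuousWithinAt)
    (fun s _ => (hφ s).hasDerivWithinAt) ?_ hB (fun s hs => ?_) (right_mem_Icc.2 hr)
  · rw [hφ₀, norm_zero]
    positivity
  · simpa only [Real.norm_eq_abs, abs_of_nonneg hs.1] using hle s

theorem abs_radialPotential_le (hg : Continuous g) (hk : 0 < k)
    (hle : ∀ t, |g t| ≤ D * Real.exp (k * t ^ 2)) (r : ℝ) :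
    |radialPotential m g r| ≤ D / (2 * k) * Real.exp (k * r ^ 2) := by
  refine abs_le_of_abs_deriv_le_mul_exp hk intervalIntegral.integral_same
    (hasDerivAt_radialPotential hg) (fun s => ?_) r
  rw [abs_mul]
  gcongr
  exact abs_radialMean_le hk.le hle s

end RadialPotential

section InitialValueProblem

open BoundedContinuousFunction

variable {m : ℕ} {h : ℝ → ℝ} {L : NNReal} {a k : ℝ}

/-- The function `a + e^(k r²) w`: bounded perturbations `w` of the initial value `a`, measured in
the Gaussian weight for which the integral form of the initial value problem is a contraction. -/
noncomputable def gaussianLift (a k : ℝ) (w : ℝ →ᵇ ℝ) (r : ℝ) : ℝ :=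
  a + Real.exp (k * r ^ 2) * w r

theorem continuous_gaussianLift (a k : ℝ) (w : ℝ →ᵇ ℝ) : Continuous (gaussianLift a k w) := by
  unfold gaussianLift
  fun_prop

theorem abs_comp_gaussianLift_sub_le (hh : LipschitzWith L h) (w₁ w₂ : ℝ →ᵇ ℝ) (t : ℝ) :
    |h (gaussianLift a k w₁ t) - h (gaussianLift a k w₂ t)|
      ≤ L * dist w₁ w₂ * Real.exp (k * t ^ 2) :=
  calc |h (gaussianLift a k w₁ t) - h (gaussianLift a k w₂ t)|
      ≤ L * |gaussianLift a k w₁ t - gaussianLift a k w₂ t| := hh.dist_le_mul _ _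
    _ = L * (Real.exp (k * t ^ 2) * |w₁ t - w₂ t|) := by
        rw [gaussianLift, gaussianLift, add_sub_add_left_eq_sub, ← mul_sub, abs_mul, Real.abs_exp]
    _ ≤ L * (Real.exp (k * t ^ 2) * dist w₁ w₂) := by
        gcongr
        exact dist_coe_le_dist (f := w₁) (g := w₂) t
    _ = L * dist w₁ w₂ * Real.exp (k * t ^ 2) := by ring

theorem abs_comp_gaussianLift_le (hh : LipschitzWith L h) (hk : 0 ≤ k) (w : ℝ →ᵇ ℝ) (t : ℝ) :
    |h (gaussianLift a k w t)| ≤ (|h a| + L * ‖w‖) * Real.exp (k * t ^ 2) := by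
  have hsub := abs_comp_gaussianLift_sub_le hh w 0 t (a := a) (k := k)
  have hzero : gaussianLift a k 0 t = a := by simp [gaussianLift]
  rw [hzero, dist_zero_right] at hsub
  have hone : |h a| ≤ |h a| * Real.exp (k * t ^ 2) :=
    le_mul_of_one_le_right (abs_nonneg _) (Real.one_le_exp (by positivity))
  linarith [abs_sub_abs_le_abs_sub (h (gaussianLift a k w t)) (h a)]

theorem exists_picardMap (m : ℕ) (hh : LipschitzWith L h) (a : ℝ) (hk : 0 < k) (w : ℝ →ᵇ ℝ) :
    ∃ w' : ℝ →ᵇ ℝ, ∀ r, w' r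
      = -Real.exp (-(k * r ^ 2)) * radialPotential m (fun t => h (gaussianLift a k w t)) r := by
  have hcont : Continuous fun t => h (gaussianLift a k w t) :=
    hh.continuous.comp (continuous_gaussianLift a k w)
  refine ⟨ofNormedAddCommGroup (fun r => -Real.exp (-(k * r ^ 2)) *
    radialPotential m (fun t => h (gaussianLift a k w t)) r) ?_ ((|h a| + L * ‖w‖) / (2 * k))
    fun r => ?_, fun r => rfl⟩
  · have := continuous_iff_continuousAt.2 fun r =>
      (hasDerivAt_radialPotential (m := m) hcont r).continuousAt
    fun_prop
  · rw [norm_mul, norm_neg, Real.norm_eq_abs, Real.norm_eq_abs, Real.abs_exp, Real.exp_neg,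
      inv_mul_le_iff₀ (Real.exp_pos _), mul_comm]
    exact abs_radialPotential_le hcont hk (abs_comp_gaussianLift_le hh hk.le w) r

theorem exists_eq_sub_radialPotential (m : ℕ) (hh : LipschitzWith L h) (a : ℝ) :
    ∃ u : ℝ → ℝ, Continuous u ∧ ∀ r, u r = a - radialPotential m (fun t => h (u t)) r := by
  let k : ℝ := L + 1
  have hk : 0 < k := by positivity
  choose T hT using exists_picardMap m hh a hk
  have hT_contracting : ContractingWith (1 / 2) T := by
    refine ⟨by norm_num, LipschitzWith.of_dist_le_mul fun w₁ w₂ => ?_⟩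
    refine (dist_le (by positivity)).2 fun r => ?_
    have hcont : ∀ w, Continuous fun t => h (gaussianLift a k w t) := fun w =>
      hh.continuous.comp (continuous_gaussianLift a k w)
    have hle := abs_radialPotential_le (m := m) ((hcont w₁).sub (hcont w₂)) hk
      (abs_comp_gaussianLift_sub_le hh w₁ w₂) r
    rw [Real.dist_eq, hT, hT, ← mul_sub, ← radialPotential_sub (hcont w₁) (hcont w₂), abs_mul,
      abs_neg, Real.abs_exp, Real.exp_neg, inv_mul_le_iff₀ (Real.exp_pos _), mul_comm]
    refine hle.trans (mul_le_mul_of_nonneg_right ?_ (Real.exp_pos _).le)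
    rw [div_le_iff₀ (by positivity)]
    have : (L : ℝ) ≤ k := (lt_add_one _).le
    calc (L : ℝ) * dist w₁ w₂ ≤ k * dist w₁ w₂ := by gcongr
      _ = ((1 / 2 : NNReal) : ℝ) * dist w₁ w₂ * (2 * k) := by push_cast; ring
  have hfix := hT_contracting.fixedPoint_isFixedPt
  refine ⟨gaussianLift a k (ContractingWith.fixedPoint T hT_contracting),
    continuous_gaussianLift _ _ _, fun r => ?_⟩
  conv_lhs => rw [← hfix.eq, gaussianLift, hT, neg_mul, Real.exp_neg, mul_neg,
    mul_inv_cancel_left₀ (Real.exp_ne_zero _), ← sub_eq_add_neg]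

theorem exists_isRadialTrajectory (m : ℕ) (hh : LipschitzWith L h) (a : ℝ) :
    ∃ u : ℝ → ℝ, ContDiff ℝ 2 u ∧ u 0 = a ∧ IsRadialTrajectory m h u (deriv u) := by
  obtain ⟨u, hu, hfix⟩ := exists_eq_sub_radialPotential m hh a
  have hg : Continuous fun t => h (u t) := hh.continuous.comp hu
  have hmean : Continuous (radialMean m fun t => h (u t)) := continuous_radialMean hg
  have hderiv : ∀ r, HasDerivAt u (-(r * radialMean m (fun t => h (u t)) r)) r := fun r =>
    ((hasDerivAt_radialPotential hg r).const_sub a).congr_of_eventuallyEq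
      (Eventually.of_forall hfix)
  have hu' : deriv u = fun r => -(r * radialMean m (fun t => h (u t)) r) :=
    funext fun r => (hderiv r).deriv
  have hderiv₂ : ∀ r, HasDerivAt (deriv u)
      (-(h (u r) - m * radialMean m (fun t => h (u t)) r)) r := fun r => by
    rw [hu']
    exact (hasDerivAt_mul_radialMean hg r).neg
  have hu'' : deriv (deriv u) = fun r => -(h (u r) - m * radialMean m (fun t => h (u t)) r) :=
    funext fun r => (hderiv₂ r).deriv
  have hC1 : ContDiff ℝ 1 (deriv u) := contDiff_one_iff_deriv.2
    ⟨fun r => (hderiv₂ r).differentiableAt, by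
      rw [hu'']
      exact (hg.sub (continuous_const.mul hmean)).neg⟩
  refine ⟨u, ?_, by simp [hfix 0, radialPotential], hu.continuousOn, hC1.continuous.continuousOn,
    fun r _ => (hderiv r).differentiableAt.hasDerivAt, fun r hr => ?_, by simp [hu']⟩
  · exact contDiff_succ_iff_deriv.2 ⟨fun r => (hderiv r).differentiableAt, by simp, hC1⟩
  · refine (hderiv₂ r).congr_deriv ?_
    rw [hu']
    field_simp
    ring

end InitialValueProblem

/-! ### Shooting -/

theorem exists_first_zero {v : ℝ → ℝ} {r : ℝ} (hv : ContinuousOn v (Ici 0))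
    (hneg : ∀ᶠ s in 𝓝[>] 0, v s < 0) (hr : 0 < r) (hvr : 0 ≤ v r) :
    ∃ t, 0 < t ∧ v t = 0 ∧ ∀ s ∈ Ioo 0 t, v s < 0 := by
  obtain ⟨ε, hε, hlt⟩ := mem_nhdsGT_iff_exists_Ioc_subset.1 hneg
  have hεr : ε < r := lt_of_not_ge fun hle => (hlt ⟨hr, hle⟩).not_ge hvr
  have hv' : ContinuousOn v (Icc ε r) :=
    hv.mono (Icc_subset_Ici_self.trans (Ici_subset_Ici.2 (le_of_lt hε)))
  obtain ⟨t, ⟨htmem, hvt⟩, htmin⟩ :=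
    (isCompact_Icc.of_isClosed_subset (hv'.preimage_isClosed_of_isClosed isClosed_Icc
      (isClosed_Ici (a := (0 : ℝ)))) inter_subset_left).exists_isLeast ⟨r, ⟨hεr.le, le_rfl⟩, hvr⟩
  have hbefore : ∀ s ∈ Ioo 0 t, v s < 0 := fun s hs => by
    rcases le_or_gt s ε with hsε | hεs
    · exact hlt ⟨hs.1, hsε⟩
    · by_contra! hge
      exact (htmin ⟨⟨hεs.le, hs.2.le.trans htmem.2⟩, hge⟩).not_gt hs.2
  refine ⟨t, hε.trans_le htmem.1, le_antisymm (not_lt.1 fun hpos => ?_) hvt, hbefore⟩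
  obtain ⟨s, hs, hvs⟩ := intermediate_value_Ioo htmem.1
    (hv'.mono (Icc_subset_Icc_right htmem.2)) ⟨hlt ⟨hε, le_rfl⟩, hpos⟩
  exact (hbefore s ⟨hε.trans hs.1, hs.2⟩).ne hvs

/-- The profile of `h` behind the shooting argument: `h` vanishes at `0` and `c`, is positive on the
window `(b, c)`, and its primitive is negative on `(0, b]` and positive at `c`. -/
structure HasPositivityWindow (h : ℝ → ℝ) (b c : ℝ) : Prop where
  left_pos : 0 < b
  left_lt_right : b < c
  map_zero : h 0 = 0
  map_right : h c = 0
  map_pos : ∀ x ∈ Ioo b c, 0 < h x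
  integral_neg : ∀ x ∈ Ioc 0 b, ∫ s in (0 : ℝ)..x, h s < 0
  integral_pos : 0 < ∫ s in (0 : ℝ)..c, h s

namespace HasPositivityWindow

variable {h : ℝ → ℝ} {b c x : ℝ}

theorem integral_nonpos (W : HasPositivityWindow h b c) (hx : x ∈ Icc 0 b) :
    ∫ s in (0 : ℝ)..x, h s ≤ 0 := by
  rcases hx.1.eq_or_lt with rfl | hx₀
  · rw [intervalIntegral.integral_same]
  · exact (W.integral_neg x ⟨hx₀, hx.2⟩).le

theorem le_left_of_map_eq_zero (W : HasPositivityWindow h b c) (hx : h x = 0) (hxc : x < c) :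
    x ≤ b :=
  not_lt.1 fun hbx => (W.map_pos x ⟨hbx, hxc⟩).ne' hx

end HasPositivityWindow

namespace IsRadialTrajectory

variable {m : ℝ} {h u v : ℝ → ℝ} {b c K R r : ℝ}

theorem velocity_neg_of_forall_first_zero (T : IsRadialTrajectory m h u v) (hm : 0 ≤ m)
    (W : HasPositivityWindow h b c) (hu₀ : u 0 ∈ Ioo b c)
    (hcrit : ∀ t, 0 < t → v t = 0 → (∀ s ∈ Ioo 0 t, v s < 0) → b < u t) (hr : 0 < r) :
    v r < 0 := by
  by_contra! hvr
  have hwindow : ∀ᶠ s in 𝓝[≥] 0, u s ∈ Ioo b c :=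
    (T.continuousOn 0 self_mem_Ici).eventually_mem (isOpen_Ioo.mem_nhds hu₀)
  obtain ⟨ε, hε, hεu⟩ := mem_nhdsGE_iff_exists_Ico_subset.1 hwindow
  have hneg : ∀ᶠ s in 𝓝[>] 0, v s < 0 := by
    filter_upwards [Ioo_mem_nhdsGT hε] with s hs
    exact T.velocity_neg hm hs.1 fun x hx => W.map_pos _ (hεu ⟨hx.1.le, hx.2.trans hs.2⟩)
  obtain ⟨t, ht, hvt, hbefore⟩ := exists_first_zero T.continuousOn_velocity hneg hr hvr
  have hanti : StrictAntiOn u (Icc 0 t) :=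
    T.strictAntiOn (convex_Icc 0 t) Icc_subset_Ici_self (by rwa [interior_Icc])
  refine (T.velocity_neg hm ht fun s hs => W.map_pos _ ⟨?_, ?_⟩).ne hvt
  · exact (hcrit t ht hvt hbefore).trans
      (hanti (Ioo_subset_Icc_self hs) (right_mem_Icc.2 ht.le) hs.2)
  · exact (hanti (left_mem_Icc.2 ht.le) (Ioo_subset_Icc_self hs) hs.1).trans hu₀.2

theorem strictAntiOn_Ici (T : IsRadialTrajectory m h u v) (hv : ∀ r, 0 < r → v r < 0) :
    StrictAntiOn u (Ici 0) :=
  T.strictAntiOn (convex_Ici 0) Subset.rfl (by rwa [interior_Ici])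

theorem exists_tendsto_mem_Icc (T : IsRadialTrajectory m h u v) (hm : 0 ≤ m) (hh : Continuous h)
    (W : HasPositivityWindow h b c) (hu₀ : u 0 < c) (hv : ∀ r, 0 < r → v r < 0)
    (hu : ∀ r, 0 ≤ r → 0 ≤ u r) : ∃ l ∈ Icc 0 b, Tendsto u atTop (𝓝 l) := by
  have hanti := (T.strictAntiOn_Ici hv).antitoneOn
  have hnonneg : ∀ᶠ r in atTop, 0 ≤ u r := (eventually_ge_atTop 0).mono hu
  obtain ⟨l, hl⟩ := exists_tendsto_of_antitoneOn_Ici hanti hnonneg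
  have hl₀ : 0 ≤ l := ge_of_tendsto hl hnonneg
  have hlu : l ≤ u 0 :=
    le_of_tendsto hl ((eventually_ge_atTop 0).mono fun r hr => hanti self_mem_Ici hr hr)
  have hlb : l ≤ b :=
    W.le_left_of_map_eq_zero (T.map_eq_zero_of_tendsto hm hh hl) (hlu.trans_lt hu₀)
  exact ⟨l, ⟨hl₀, hlb⟩, hl⟩

theorem energy_sub_le_of_velocity_neg (T : IsRadialTrajectory m h u v) (hm : 0 ≤ m)
    (hh : Continuous h) (hK : ∀ x ∈ Icc 0 c, |∫ s in (0 : ℝ)..x, h s| ≤ K) (hu₀ : u 0 ≤ c)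
    (hu : ∀ s, 0 ≤ s → 0 ≤ u s) (hR : 0 < R) (hr : 0 ≤ r) (hv : ∀ s ∈ Ioo 0 r, v s < 0) :
    energy h u v R - m / R * √(4 * K) * c ≤ energy h u v r := by
  have hcoef : 0 ≤ m / R * √(4 * K) := mul_nonneg (div_nonneg hm hR.le) (Real.sqrt_nonneg _)
  rcases le_total r R with hrR | hRr
  · have hc : 0 ≤ c := (hu 0 le_rfl).trans hu₀
    linarith [T.antitoneOn_energy hm hh hr hR.le hrR, mul_nonneg hcoef hc]
  have hanti : AntitoneOn u (Icc 0 r) :=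
    (T.strictAntiOn (convex_Icc 0 r) Icc_subset_Ici_self (by rwa [interior_Icc])).antitoneOn
  have hmem : ∀ s ∈ Icc 0 r, u s ∈ Icc 0 c := fun s hs =>
    ⟨hu s hs.1, (hanti (left_mem_Icc.2 hr) hs hs.1).trans hu₀⟩
  have hspeed : ∀ s ∈ Ioo R r, -√(4 * K) ≤ v s ∧ v s ≤ 0 := fun s hs => by
    have hs₀ : 0 < s := hR.trans hs.1
    exact ⟨(abs_le.1 (T.abs_velocity_le hm hh hs₀.le (hK _ (hmem 0 (left_mem_Icc.2 hr)))
      (hK _ (hmem s ⟨hs₀.le, hs.2.le⟩)))).1, (hv s ⟨hs₀, hs.2⟩).le⟩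
  have hdrop : u R - u r ≤ c := by linarith [(hmem R ⟨hR.le, hRr⟩).2, hu r hr]
  linarith [T.energy_sub_le hm hh hR hRr hspeed, mul_le_mul_of_nonneg_left hdrop hcoef]

-- A trajectory that stays nonnegative would keep positive energy while it decreases, but the
-- energy at a critical point in `[0, b]`, or at a limit in `[0, b]`, is nonpositive.
theorem exists_neg_of_lt_energy (T : IsRadialTrajectory m h u v) (hm : 0 ≤ m) (hh : Continuous h)
    (W : HasPositivityWindow h b c) (hK : ∀ x ∈ Icc 0 c, |∫ s in (0 : ℝ)..x, h s| ≤ K)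
    (hu₀ : u 0 ∈ Ioo b c) (hR : 0 < R) (hE : m / R * √(4 * K) * c < energy h u v R) :
    ∃ r, 0 ≤ r ∧ u r < 0 := by
  by_contra! hu
  have hle : ∀ r, 0 ≤ r → (∀ s ∈ Ioo 0 r, v s < 0) →
      energy h u v R - m / R * √(4 * K) * c ≤ energy h u v r := fun r =>
    T.energy_sub_le_of_velocity_neg hm hh hK hu₀.2.le hu hR
  have hv : ∀ r, 0 < r → v r < 0 := fun r =>
    T.velocity_neg_of_forall_first_zero hm W hu₀ fun t ht hvt hbefore => by
      by_contra! hub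
      have hEt : energy h u v t = ∫ s in (0 : ℝ)..u t, h s := by simp [energy, hvt]
      linarith [hle t ht.le hbefore, W.integral_nonpos ⟨hu t ht.le, hub⟩]
  obtain ⟨l, hl, hlim⟩ := T.exists_tendsto_mem_Icc hm hh W hu₀.2 hv hu
  have hEl : energy h u v R - m / R * √(4 * K) * c ≤ ∫ s in (0 : ℝ)..l, h s :=
    ge_of_tendsto (T.tendsto_energy hm hh hlim) <| (eventually_ge_atTop 0).mono fun r hr =>
      hle r hr fun s hs => hv s hs.1
  linarith [W.integral_nonpos hl]

-- Below `0` there is no force, so a trajectory that crosses `0` cannot turn back: an interior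
-- negative minimum would be an equilibrium.
theorem energy_nonneg_of_exists_neg (T : IsRadialTrajectory m h u v) (hm : 0 ≤ m)
    (hh : LocallyLipschitz h) (hh₀ : ∀ x ≤ 0, h x = 0) (hu₀ : 0 < u 0) {s : ℝ} (hs : 0 ≤ s)
    (hus : u s < 0) (hr : 0 ≤ r) : 0 ≤ energy h u v r := by
  have henergy : ∀ r, u r ≤ 0 → 0 ≤ energy h u v r := fun r hur => by
    have hint : ∫ x in (0 : ℝ)..u r, h x = 0 :=
      intervalIntegral.integral_zero_ae (Eventually.of_forall fun x hx => hh₀ x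
        (by rw [uIoc_of_ge hur] at hx; exact hx.2))
    rw [energy, hint]
    positivity
  rcases le_total r s with hrs | hsr
  · exact (henergy s hus.le).trans (T.antitoneOn_energy hm hh.continuous hr hs hrs)
  refine henergy r (not_lt.1 fun hur => ?_)
  obtain ⟨t, ht, hmin⟩ := isCompact_Icc.exists_isMinOn ⟨s, hs, hsr⟩
    (T.continuousOn.mono Icc_subset_Ici_self)
  have hut : u t < 0 := (hmin ⟨hs, hsr⟩).trans_lt hus
  have ht₀ : 0 < t := ht.1.lt_of_ne' fun h0 => hu₀.not_gt (h0 ▸ hut)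
  have htr : t < r := ht.2.lt_of_ne fun h0 => hur.not_gt (h0 ▸ hut)
  have hvt : v t = 0 :=
    (hmin.isLocalMin (Icc_mem_nhds ht₀ htr)).hasDerivAt_eq_zero (T.hasDerivAt t ht₀)
  exact (T.eq_left_of_velocity_eq_zero hm hh ht.1 ht.2 hvt (hh₀ _ hut.le) ▸ hut).not_gt hur

theorem velocity_neg_of_energy_nonneg (T : IsRadialTrajectory m h u v) (hm : 0 ≤ m)
    (hh : LocallyLipschitz h) (W : HasPositivityWindow h b c) (hu₀ : u 0 ∈ Ioo b c)
    (hE : ∀ r, 0 ≤ r → 0 ≤ energy h u v r) (hu : ∀ r, 0 ≤ r → 0 ≤ u r) (hr : 0 < r) :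
    v r < 0 := by
  refine T.velocity_neg_of_forall_first_zero hm W hu₀ (fun t ht hvt hbefore => ?_) hr
  have hut : u t ≠ 0 := fun hut => by
    have hhalf := T.strictAntiOn (convex_Icc 0 t) Icc_subset_Ici_self (by rwa [interior_Icc])
      ⟨(half_pos ht).le, (half_lt_self ht).le⟩ (right_mem_Icc.2 ht.le) (half_lt_self ht)
    exact hhalf.ne' (T.eq_right_of_velocity_eq_zero hm hh (half_pos ht) (half_lt_self ht).le hvt
      (hut ▸ W.map_zero))
  by_contra! hub
  have hint := W.integral_neg (u t) ⟨(hu t ht.le).lt_of_ne' hut, hub⟩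
  have hEt : energy h u v t = ∫ s in (0 : ℝ)..u t, h s := by simp [energy, hvt]
  exact (hEt ▸ hE t ht.le).not_gt hint

theorem mem_Ioo_and_tendsto_zero (T : IsRadialTrajectory m h u v) (hm : 0 ≤ m)
    (hh : LocallyLipschitz h) (W : HasPositivityWindow h b c) (hu₀ : u 0 ∈ Ioo b c)
    (hE : ∀ r, 0 ≤ r → 0 ≤ energy h u v r) (hu : ∀ r, 0 ≤ r → 0 ≤ u r) :
    (∀ r, 0 ≤ r → u r ∈ Ioo 0 c) ∧ Tendsto u atTop (𝓝 0) := by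
  have hv : ∀ r, 0 < r → v r < 0 := fun r => T.velocity_neg_of_energy_nonneg hm hh W hu₀ hE hu
  have hanti := T.strictAntiOn_Ici hv
  refine ⟨fun r hr => ⟨?_, (hanti.antitoneOn self_mem_Ici hr hr).trans_lt hu₀.2⟩, ?_⟩
  · have hr1 : r < r + 1 := lt_add_one r
    exact (hu _ (hr.trans hr1.le)).trans_lt (hanti hr (hr.trans hr1.le) hr1)
  obtain ⟨l, hl, hlim⟩ := T.exists_tendsto_mem_Icc hm hh.continuous W hu₀.2 hv hu
  have hint : 0 ≤ ∫ s in (0 : ℝ)..l, h s :=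
    ge_of_tendsto (T.tendsto_energy hm hh.continuous hlim) ((eventually_ge_atTop 0).mono hE)
  rcases hl.1.eq_or_lt with rfl | hl₀
  · exact hlim
  · exact absurd hint (W.integral_neg l ⟨hl₀, hl.2⟩).not_ge

end IsRadialTrajectory

theorem isOpen_setOf_exists_nonneg_lt {α : Type*} [TopologicalSpace α] {F : α → ℝ → ℝ}
    (hF : ∀ r, 0 ≤ r → Continuous fun a => F a r) : IsOpen {a | ∃ r, 0 ≤ r ∧ F a r < 0} := by
  simp only [Set.ofPred_exists, ← exists_prop]
  exact isOpen_iUnion fun r => isOpen_iUnion fun hr => isOpen_lt (hF r hr) continuous_const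

theorem continuous_of_sq_le {φ : ℝ → ℝ} {C : ℝ}
    (hφ : ∀ a a', (φ a - φ a') ^ 2 ≤ (a - a') ^ 2 * C) : Continuous φ := by
  have hlip : LipschitzWith (√C).toNNReal φ := LipschitzWith.of_dist_le_mul fun a a' => by
    rw [Real.coe_toNNReal _ (Real.sqrt_nonneg C), Real.dist_eq, Real.dist_eq, mul_comm,
      ← Real.sqrt_sq_eq_abs (a - a'), ← Real.sqrt_mul (sq_nonneg _)]
    exact Real.abs_le_sqrt (hφ a a')
  exact hlip.continuous

/-- Trajectories `(U a, V a)` of the radial equation, one for each initial value `a`. -/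
def IsShootingFamily (m : ℝ) (h : ℝ → ℝ) (U V : ℝ → ℝ → ℝ) : Prop :=
  ∀ a, IsRadialTrajectory m h (U a) (V a) ∧ U a 0 = a

namespace IsShootingFamily

variable {m : ℝ} {h : ℝ → ℝ} {U V : ℝ → ℝ → ℝ} {L : NNReal} {b c r : ℝ}

theorem phaseDistSq_le (S : IsShootingFamily m h U V) (hm : 0 ≤ m) (hh : LipschitzWith L h)
    (hr : 0 ≤ r) (a a' : ℝ) :
    phaseDistSq (U a) (V a) (U a') (V a') r ≤ (a - a') ^ 2 * Real.exp ((1 + L) * r) := by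
  have hle := (S a).1.phaseDistSq_le_mul_exp (S a').1 hm (hh.lipschitzOnWith (s := univ)) le_rfl hr
    (mapsTo_univ _ _) (mapsTo_univ _ _)
  rwa [phaseDistSq, phaseDistSq, (S a).2, (S a').2, (S a).1.velocity_zero, (S a').1.velocity_zero,
    sub_zero, sub_zero, zero_pow two_ne_zero, add_zero] at hle

theorem continuous_position (S : IsShootingFamily m h U V) (hm : 0 ≤ m) (hh : LipschitzWith L h)
    (hr : 0 ≤ r) : Continuous fun a => U a r :=
  continuous_of_sq_le fun a a' =>
    (le_add_of_nonneg_right (sq_nonneg _)).trans (S.phaseDistSq_le hm hh hr a a')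

theorem continuous_velocity (S : IsShootingFamily m h U V) (hm : 0 ≤ m) (hh : LipschitzWith L h)
    (hr : 0 ≤ r) : Continuous fun a => V a r :=
  continuous_of_sq_le fun a a' =>
    (le_add_of_nonneg_left (sq_nonneg _)).trans (S.phaseDistSq_le hm hh hr a a')

theorem continuous_energy (S : IsShootingFamily m h U V) (hm : 0 ≤ m) (hh : LipschitzWith L h)
    (hr : 0 ≤ r) : Continuous fun a => energy h (U a) (V a) r :=
  (((S.continuous_velocity hm hh hr).pow 2).div_const 2).add
    ((continuous_integral_of_continuous hh.continuous).comp (S.continuous_position hm hh hr))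

theorem exists_mem_Ioo_exists_neg (S : IsShootingFamily m h U V) (hm : 0 ≤ m)
    (hh : LipschitzWith L h) (W : HasPositivityWindow h b c) :
    ∃ a ∈ Ioo b c, ∃ r, 0 ≤ r ∧ U a r < 0 := by
  obtain ⟨K, hK⟩ := isCompact_Icc.exists_bound_of_continuousOn
    (continuous_integral_of_continuous hh.continuous).continuousOn (s := Icc 0 c)
  have hequil : ∀ r, 0 ≤ r → ∫ s in (0 : ℝ)..c, h s ≤ energy h (U c) (V c) r := fun r hr => by
    have hUr : U c r = c := by
      rw [(S c).1.eq_left_of_velocity_eq_zero hm hh.locallyLipschitz le_rfl hr (S c).1.velocity_zero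
        (by rw [(S c).2, W.map_right]), (S c).2]
    rw [energy, hUr]
    exact le_add_of_nonneg_left (by positivity)
  have hsmall : Tendsto (fun R => m / R * √(4 * K) * c) atTop (𝓝 0) := by
    simpa using ((tendsto_const_nhds.div_atTop tendsto_id).mul_const (√(4 * K))).mul_const c
  obtain ⟨R, hRlt, hR⟩ :=
    ((hsmall.eventually_lt_const W.integral_pos).and (eventually_gt_atTop 0)).exists
  have hnear : ∀ᶠ a in 𝓝[<] c, m / R * √(4 * K) * c < energy h (U a) (V a) R :=
    ((S.continuous_energy hm hh hR.le).continuousAt.eventually_const_lt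
      (hRlt.trans_le (hequil R hR.le))).filter_mono nhdsWithin_le_nhds
  obtain ⟨a, hE, ha⟩ := (hnear.and (Ioo_mem_nhdsLT W.left_lt_right)).exists
  exact ⟨a, ha, (S a).1.exists_neg_of_lt_energy hm hh.continuous W hK ((S a).2.symm ▸ ha) hR hE⟩

-- Connectedness of `[b, c)`: the initial values whose energy becomes negative (among them `b`) and
-- those whose trajectory crosses `0` (among them all close to `c`) form disjoint open sets.
theorem exists_mem_Ioo_nonneg (S : IsShootingFamily m h U V) (hm : 0 ≤ m)
    (hh : LipschitzWith L h) (hh₀ : ∀ x ≤ 0, h x = 0) (W : HasPositivityWindow h b c) :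
    ∃ a ∈ Ioo b c, (∀ r, 0 ≤ r → 0 ≤ energy h (U a) (V a) r) ∧ ∀ r, 0 ≤ r → 0 ≤ U a r := by
  by_contra! hcon
  obtain ⟨a₁, ha₁, hcross⟩ := S.exists_mem_Ioo_exists_neg hm hh W
  have hb : ∃ r, 0 ≤ r ∧ energy h (U b) (V b) r < 0 := by
    refine ⟨0, le_rfl, ?_⟩
    rw [(S b).1.energy_zero, (S b).2]
    exact W.integral_neg b ⟨W.left_pos, le_rfl⟩
  have hcover : Ico b c ⊆ {a | ∃ r, 0 ≤ r ∧ energy h (U a) (V a) r < 0} ∪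
      {a | ∃ r, 0 ≤ r ∧ U a r < 0} := fun a ha => by
    rcases ha.1.eq_or_lt with rfl | hba
    · exact Or.inl hb
    · by_cases hE : ∀ r, 0 ≤ r → 0 ≤ energy h (U a) (V a) r
      · exact Or.inr (hcon a ⟨hba, ha.2⟩ hE)
      · push Not at hE
        exact Or.inl hE
  obtain ⟨a, ha, ⟨r, hr, hE⟩, ⟨s, hs, hU⟩⟩ := isPreconnected_Ico _ _
    (isOpen_setOf_exists_nonneg_lt fun r => S.continuous_energy hm hh)
    (isOpen_setOf_exists_nonneg_lt fun r => S.continuous_position hm hh) hcover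
    ⟨b, left_mem_Ico.2 W.left_lt_right, hb⟩ ⟨a₁, Ioo_subset_Ico_self ha₁, hcross⟩
  have hU₀ : 0 < U a 0 := (S a).2.symm ▸ W.left_pos.trans_le ha.1
  exact hE.not_ge ((S a).1.energy_nonneg_of_exists_neg hm hh.locallyLipschitz hh₀ hU₀ hs hU hr)

end IsShootingFamily

theorem exists_positive_decaying_trajectory {h : ℝ → ℝ} {L : NNReal} {b c : ℝ} (m : ℕ)
    (hh : LipschitzWith L h) (hh₀ : ∀ x ≤ 0, h x = 0) (W : HasPositivityWindow h b c) :
    ∃ u : ℝ → ℝ, ContDiff ℝ 2 u ∧ IsRadialTrajectory m h u (deriv u) ∧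
      (∀ r, 0 ≤ r → u r ∈ Ioo 0 c) ∧ Tendsto u atTop (𝓝 0) := by
  choose U hU hU₀ hT using exists_isRadialTrajectory m hh
  have S : IsShootingFamily m h U fun a => deriv (U a) := fun a => ⟨hT a, hU₀ a⟩
  obtain ⟨a, ha, hE, hu⟩ := S.exists_mem_Ioo_nonneg m.cast_nonneg hh hh₀ W
  exact ⟨U a, hU a, hT a, (hT a).mem_Ioo_and_tendsto_zero m.cast_nonneg hh.locallyLipschitz W
    ((hU₀ a).symm ▸ ha) hE hu⟩

theorem IsPositiveSolution.isRadialTrajectory {n : ℕ} {g u : ℝ → ℝ}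
    (hu : IsPositiveSolution n g u) :
    IsRadialTrajectory ((n : ℝ) - 1) g u (derivWithin u (Ici 0)) := by
  obtain ⟨hC2, -, hode, hneumann, -⟩ := hu
  have hC1 : ContDiffOn ℝ 1 (derivWithin u (Ici 0)) (Ici 0) :=
    hC2.derivWithin (uniqueDiffOn_Ici 0) (by norm_num)
  refine ⟨hC2.continuousOn, hC1.continuousOn, fun r hr => ?_, fun r hr => ?_, hneumann⟩
  · exact (hC2.differentiableOn two_ne_zero r hr.le).hasDerivWithinAt.hasDerivAt (Ici_mem_nhds hr)
  · have hderiv := ((hC1.differentiableOn one_ne_zero r hr.le).hasDerivWithinAt).hasDerivAt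
      (Ici_mem_nhds hr)
    refine hderiv.congr_deriv ?_
    have hode_r := hode r hr
    rw [iteratedDerivWithin_succ, iteratedDerivWithin_one] at hode_r
    linarith

theorem IsRadialTrajectory.isPositiveSolution {m : ℕ} {g u : ℝ → ℝ} (hC2 : ContDiff ℝ 2 u)
    (T : IsRadialTrajectory m g u (deriv u)) (hpos : ∀ r, 0 ≤ r → 0 < u r)
    (hlim : Tendsto u atTop (𝓝 0)) : IsPositiveSolution (m + 1) g u := by
  have hderiv : ∀ r, 0 ≤ r → derivWithin u (Ici 0) r = deriv u r := fun r hr =>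
    (hC2.differentiable two_ne_zero r).derivWithin (uniqueDiffOn_Ici 0 r hr)
  refine ⟨hC2.contDiffOn, hpos, fun r hr => ?_, by rw [hderiv 0 le_rfl, T.velocity_zero], hlim⟩
  rw [iteratedDerivWithin_eq_iteratedDeriv (uniqueDiffOn_Ici 0) hC2.contDiffAt hr.le,
    iteratedDeriv_succ, iteratedDeriv_one, (T.hasDerivAt_velocity r hr).deriv, hderiv r hr.le]
  push_cast
  ring

theorem IsPositiveSolution.exists_integral_pos {n : ℕ} {g u : ℝ → ℝ} (hn : 1 ≤ n)
    (hg : LocallyLipschitz g) (hu : IsPositiveSolution n g u) :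
    ∃ x, 0 < x ∧ 0 < ∫ s in (0 : ℝ)..x, g s := by
  by_contra! hF
  have hm : (0 : ℝ) ≤ n - 1 := sub_nonneg.2 (Nat.one_le_cast.2 hn)
  have T := hu.isRadialTrajectory
  obtain ⟨-, hpos, -, -, hlim⟩ := hu
  have hu₀ : 0 < u 0 := hpos 0 le_rfl
  have hE : 0 ≤ ∫ s in (0 : ℝ)..u 0, g s := by
    rw [← T.energy_zero]
    simpa using T.integral_le_energy hm hg.continuous hlim le_rfl
  have hmax : IsLocalMax (fun x => ∫ s in (0 : ℝ)..x, g s) (u 0) := by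
    filter_upwards [eventually_gt_nhds hu₀] with x hx using (hF x hx).trans hE
  have hcrit : g (u 0) = 0 :=
    hmax.hasDerivAt_eq_zero (hasDerivAt_integral_of_continuous hg.continuous (u 0))
  have hconst : Tendsto u atTop (𝓝 (u 0)) := by
    refine tendsto_const_nhds.congr' ((eventually_ge_atTop 0).mono fun r hr => ?_)
    exact (T.eq_left_of_velocity_eq_zero hm hg le_rfl hr T.velocity_zero hcrit).symm
  exact hu₀.ne' (tendsto_nhds_unique hconst hlim)

theorem lipschitzWith_IccExtend {g : ℝ → ℝ} {L : NNReal} {a b : ℝ} (hab : a ≤ b)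
    (hg : LipschitzOnWith L g (Icc a b)) :
    LipschitzWith L (Set.IccExtend hab ((Icc a b).domRestrict g)) := by
  simpa only [mul_one, Set.IccExtend] using hg.to_restrict.comp (LipschitzWith.projIcc hab)

theorem HasPositivityWindow.congr {g h : ℝ → ℝ} {b c : ℝ} (W : HasPositivityWindow g b c)
    (hgh : EqOn g h (Icc 0 c)) : HasPositivityWindow h b c := by
  have hc : 0 < c := W.left_pos.trans W.left_lt_right
  have hint : ∀ x ∈ Icc 0 c, ∫ s in (0 : ℝ)..x, g s = ∫ s in (0 : ℝ)..x, h s := fun x hx =>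
    intervalIntegral.integral_congr (hgh.mono (uIcc_subset_Icc (left_mem_Icc.2 hc.le) hx))
  refine ⟨W.left_pos, W.left_lt_right, ?_, ?_, fun x hx => ?_, fun x hx => ?_, ?_⟩
  · rw [← hgh (left_mem_Icc.2 hc.le), W.map_zero]
  · rw [← hgh (right_mem_Icc.2 hc.le), W.map_right]
  · rw [← hgh ⟨(W.left_pos.trans hx.1).le, hx.2.le⟩]
    exact W.map_pos x hx
  · rw [← hint x ⟨hx.1.le, hx.2.trans W.left_lt_right.le⟩]
    exact W.integral_neg x hx
  · rw [← hint c (right_mem_Icc.2 hc.le)]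
    exact W.integral_pos

-- Solutions with values in `[0, c]` do not see `g` outside `[0, c]`, so `g` may be frozen there.
theorem HasPositivityWindow.exists_isPositiveSolution {g : ℝ → ℝ} {b c : ℝ}
    (W : HasPositivityWindow g b c) (hg : LocallyLipschitz g) (m : ℕ) :
    ∃ u, IsPositiveSolution (m + 1) g u := by
  have hc : 0 ≤ c := (W.left_pos.trans W.left_lt_right).le
  obtain ⟨L, hL⟩ := (hg.locallyLipschitzOn (s := Icc 0 c)).exists_lipschitzOnWith_of_compact
    isCompact_Icc
  have heq : EqOn g (Set.IccExtend hc ((Icc 0 c).domRestrict g)) (Icc 0 c) := fun x hx =>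
    (IccExtend_of_mem hc ((Icc 0 c).domRestrict g) hx).symm
  have hzero : ∀ x ≤ 0, Set.IccExtend hc ((Icc 0 c).domRestrict g) x = 0 := fun x hx => by
    rw [IccExtend_of_le_left hc _ hx, domRestrict_apply, W.map_zero]
  obtain ⟨u, hC2, T, hmem, hlim⟩ :=
    exists_positive_decaying_trajectory m (lipschitzWith_IccExtend hc hL) hzero (W.congr heq)
  have Tg : IsRadialTrajectory m g u (deriv u) :=
    T.congr fun r hr => (heq (Ioo_subset_Icc_self (hmem r hr.le))).symm
  exact ⟨u, Tg.isPositiveSolution hC2 (fun r hr => (hmem r hr).1) hlim⟩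

/-! ### Bistable nonlinearities -/

/-- The set of positive arguments at which `g` is positive. -/
def positivitySet (g : ℝ → ℝ) : Set ℝ := {x | 0 < x ∧ 0 < g x}

/-- The sign pattern `-`, `+`, `-` on the half-line: `g` vanishes at `0`, is negative just to the
right of `0`, and is positive on a bounded interval only, which may be empty. -/
structure IsBistable (g : ℝ → ℝ) : Prop where
  locallyLipschitz : LocallyLipschitz g
  map_zero : g 0 = 0
  eventually_neg : ∀ᶠ x in 𝓝[>] 0, g x < 0
  ordConnected : (positivitySet g).OrdConnected
  bddAbove : BddAbove (positivitySet g)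

theorem isOpen_positivitySet {g : ℝ → ℝ} (hg : Continuous g) : IsOpen (positivitySet g) :=
  isOpen_Ioi.inter (isOpen_Ioi.preimage hg)

theorem map_nonpos_of_notMem_positivitySet {g : ℝ → ℝ} {x : ℝ} (hx : 0 < x)
    (hxS : x ∉ positivitySet g) : g x ≤ 0 :=
  not_lt.1 fun hgx => hxS ⟨hx, hgx⟩

theorem eq_Ioo_csInf_csSup_of_isOpen {S : Set ℝ} (hS : IsOpen S) (hconn : IsConnected S)
    (hbelow : BddBelow S) (habove : BddAbove S) : S = Ioo (sInf S) (sSup S) := by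
  refine Subset.antisymm ?_ (hconn.Ioo_csInf_csSup_subset hbelow habove)
  rw [← interior_Icc]
  exact interior_maximal (subset_Icc_csInf_csSup hbelow habove) hS

theorem antitoneOn_integral_of_nonpos {g : ℝ → ℝ} {D : Set ℝ} (hg : Continuous g)
    (hD : Convex ℝ D) (hnonpos : ∀ x ∈ interior D, g x ≤ 0) :
    AntitoneOn (fun x => ∫ s in (0 : ℝ)..x, g s) D :=
  antitoneOn_of_hasDerivWithinAt_nonpos hD (continuous_integral_of_continuous hg).continuousOn
    (fun x _ => (hasDerivAt_integral_of_continuous hg x).hasDerivWithinAt) hnonpos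

namespace IsBistable

variable {g : ℝ → ℝ} {b c x : ℝ}

theorem continuous (B : IsBistable g) : Continuous g :=
  B.locallyLipschitz.continuous

theorem positivitySet_nonempty (B : IsBistable g) (hx : 0 < x)
    (hF : 0 < ∫ s in (0 : ℝ)..x, g s) : (positivitySet g).Nonempty := by
  by_contra! hempty
  have hnonpos : ∀ y ∈ interior (Ici (0 : ℝ)), g y ≤ 0 := fun y hy => by
    rw [interior_Ici] at hy
    exact map_nonpos_of_notMem_positivitySet hy (hempty ▸ notMem_empty y)
  have hle := antitoneOn_integral_of_nonpos B.continuous (convex_Ici 0) hnonpos self_mem_Ici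
    hx.le hx.le
  exact hF.not_ge (hle.trans_eq intervalIntegral.integral_same)

theorem exists_pos_le_of_mem_positivitySet (B : IsBistable g) :
    ∃ δ > 0, ∀ x ∈ positivitySet g, δ ≤ x := by
  obtain ⟨δ, hδ, hneg⟩ := mem_nhdsGT_iff_exists_Ioo_subset.1 B.eventually_neg
  exact ⟨δ, hδ, fun x hx => not_lt.1 fun hxδ => hx.2.not_gt (hneg ⟨hx.1, hxδ⟩)⟩

theorem exists_positivitySet_eq_Ioo (B : IsBistable g) (hx : 0 < x)
    (hF : 0 < ∫ s in (0 : ℝ)..x, g s) : ∃ b c, 0 < b ∧ b < c ∧ positivitySet g = Ioo b c := by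
  have hne := B.positivitySet_nonempty hx hF
  obtain ⟨δ, hδ, hle⟩ := B.exists_pos_le_of_mem_positivitySet
  have heq := eq_Ioo_csInf_csSup_of_isOpen (isOpen_positivitySet B.continuous)
    ⟨hne, B.ordConnected.isPreconnected⟩ ⟨δ, hle⟩ B.bddAbove
  exact ⟨_, _, hδ.trans_le (le_csInf hne hle), nonempty_Ioo.1 (heq ▸ hne), heq⟩

theorem map_right_eq_zero (B : IsBistable g) (hb : 0 < b) (hbc : b < c)
    (hS : positivitySet g = Ioo b c) : g c = 0 := by
  have hc : c ∉ positivitySet g := fun hcS => (hS.le hcS).2.false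
  have hsub : closure (Ioo b c) ⊆ {x | 0 ≤ g x} :=
    closure_minimal (fun x hx => (hS.ge hx).2.le) (isClosed_le continuous_const B.continuous)
  rw [closure_Ioo hbc.ne] at hsub
  exact le_antisymm (map_nonpos_of_notMem_positivitySet (hb.trans hbc) hc)
    (hsub (right_mem_Icc.2 hbc.le))

theorem integral_neg (B : IsBistable g) (hS : positivitySet g = Ioo b c) (hx : x ∈ Ioc 0 b) :
    ∫ s in (0 : ℝ)..x, g s < 0 := by
  have hnonpos : ∀ y ∈ Ioc 0 x, g y ≤ 0 := fun y hy =>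
    map_nonpos_of_notMem_positivitySet hy.1 fun hyS =>
      (hS.le hyS).1.not_ge (hy.2.trans hx.2)
  obtain ⟨y, hneg, hy⟩ := (B.eventually_neg.and (Ioc_mem_nhdsGT hx.1)).exists
  calc ∫ s in (0 : ℝ)..x, g s < ∫ _ in (0 : ℝ)..x, (0 : ℝ) :=
        intervalIntegral.integral_lt_integral_of_continuousOn_of_le_of_exists_lt hx.1
          B.continuous.continuousOn continuousOn_const hnonpos ⟨y, Ioc_subset_Icc_self hy, hneg⟩
    _ = 0 := intervalIntegral.integral_zero

theorem integral_le_integral_right (B : IsBistable g) (hb : 0 < b) (hbc : b < c)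
    (hS : positivitySet g = Ioo b c) (hx : b ≤ x) :
    ∫ s in (0 : ℝ)..x, g s ≤ ∫ s in (0 : ℝ)..c, g s := by
  rcases le_total x c with hxc | hcx
  · have hmono : MonotoneOn (fun x => ∫ s in (0 : ℝ)..x, g s) (Icc b c) :=
      monotoneOn_of_hasDerivWithinAt_nonneg (convex_Icc b c)
        (continuous_integral_of_continuous B.continuous).continuousOn
        (fun y _ => (hasDerivAt_integral_of_continuous B.continuous y).hasDerivWithinAt)
        fun y hy => (hS.ge (interior_Icc.subset hy)).2.le
    exact hmono ⟨hx, hxc⟩ (right_mem_Icc.2 hbc.le) hxc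
  · refine antitoneOn_integral_of_nonpos B.continuous (convex_Ici c) (fun y hy => ?_) self_mem_Ici
      hcx hcx
    rw [interior_Ici] at hy
    exact map_nonpos_of_notMem_positivitySet (hb.trans (hbc.trans hy)) fun hyS =>
      (hS.le hyS).2.not_gt hy

theorem exists_hasPositivityWindow (B : IsBistable g) (hx : 0 < x)
    (hF : 0 < ∫ s in (0 : ℝ)..x, g s) : ∃ b c, HasPositivityWindow g b c := by
  obtain ⟨b, c, hb, hbc, hS⟩ := B.exists_positivitySet_eq_Ioo hx hF
  have hbx : b ≤ x := not_lt.1 fun hxb => hF.not_gt (B.integral_neg hS ⟨hx, hxb.le⟩)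
  exact ⟨b, c, hb, hbc, B.map_zero, B.map_right_eq_zero hb hbc hS, fun y hy => (hS.ge hy).2,
    fun y hy => B.integral_neg hS hy, hF.trans_le (B.integral_le_integral_right hb hbc hS hbx)⟩

end IsBistable

section DoublePower

variable {ω p q x : ℝ}

theorem f_eq_mul (hp : 1 < p) (hx : 0 < x) :
    f ω p q x = x * (x ^ (p - 1) - (x ^ (p - 1)) ^ ((q - 1) / (p - 1)) - ω) := by
  rw [f, ← Real.rpow_mul hx.le, mul_div_cancel₀ _ (sub_pos.2 hp).ne', Real.rpow_sub_one hx.ne',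
    Real.rpow_sub_one hx.ne']
  field_simp
  ring

theorem contDiff_f (hp : 1 < p) (hpq : p < q) : ContDiff ℝ 1 (f ω p q) := by
  have hpow : ∀ s : ℝ, 1 < s → ContDiff ℝ 1 fun x : ℝ => x ^ s := fun s hs => by
    exact_mod_cast Real.contDiff_rpow_const_of_le (n := 1) (by exact_mod_cast hs.le)
  exact ((contDiff_const.mul contDiff_id).add (hpow p hp)).sub (hpow q (hp.trans hpq))

-- After the substitution `t = x ^ (p - 1)` positivity means `ω < t - t ^ γ` with `γ > 1`, and the
-- right-hand side is concave in `t`.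
theorem ordConnected_positivitySet_f (hp : 1 < p) (hpq : p < q) :
    (positivitySet (f ω p q)).OrdConnected := by
  have hp₀ : 0 < p - 1 := sub_pos.2 hp
  have hγ : 1 ≤ (q - 1) / (p - 1) := (one_le_div hp₀).2 (by linarith)
  have hconc : ConcaveOn ℝ (Ici 0) fun t : ℝ => t - t ^ ((q - 1) / (p - 1)) :=
    (concaveOn_id (convex_Ici 0)).sub (convexOn_rpow hγ)
  have hmem : ∀ x, 0 < x → (0 < f ω p q x ↔
      x ^ (p - 1) ∈ {t ∈ Ici (0 : ℝ) | ω < t - t ^ ((q - 1) / (p - 1))}) := fun x hx => by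
    rw [f_eq_mul hp hx, mul_pos_iff_of_pos_left hx, sub_pos]
    exact ⟨fun hlt => ⟨Real.rpow_nonneg hx.le _, hlt⟩, And.right⟩
  refine ⟨fun x hx z hz y hy => ?_⟩
  have hy₀ : 0 < y := hx.1.trans_le hy.1
  refine ⟨hy₀, (hmem y hy₀).2 ((hconc.convex_gt ω).ordConnected.out ((hmem x hx.1).1 hx.2)
    ((hmem z hz.1).1 hz.2) ⟨?_, ?_⟩)⟩
  · exact Real.rpow_le_rpow hx.1.le hy.1 hp₀.le
  · exact Real.rpow_le_rpow hy₀.le hy.2 hp₀.le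

theorem eventually_f_neg (hω : 0 < ω) (hp : 1 < p) : ∀ᶠ x in 𝓝[>] 0, f ω p q x < 0 := by
  have hp₀ : 0 < p - 1 := sub_pos.2 hp
  have hlim : Tendsto (fun x : ℝ => x ^ (p - 1)) (𝓝[>] 0) (𝓝 0) := by
    have hcont := (Real.continuousAt_rpow_const 0 (p - 1) (Or.inr hp₀.le)).tendsto
    rw [Real.zero_rpow hp₀.ne'] at hcont
    exact hcont.mono_left nhdsWithin_le_nhds
  filter_upwards [hlim.eventually_lt_const hω, self_mem_nhdsWithin] with x hxω hx
  rw [f_eq_mul hp hx]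
  have hpow : 0 ≤ (x ^ (p - 1)) ^ ((q - 1) / (p - 1)) :=
    Real.rpow_nonneg (Real.rpow_nonneg (le_of_lt hx) _) _
  exact mul_neg_of_pos_of_neg hx (by linarith)

theorem f_neg_of_one_le (hω : 0 < ω) (hpq : p < q) (hx : 1 ≤ x) : f ω p q x < 0 := by
  have hpow : x ^ p ≤ x ^ q := Real.rpow_le_rpow_of_exponent_le hx hpq.le
  have hlin : 0 < ω * x := mul_pos hω (one_pos.trans_le hx)
  rw [f]
  linarith

theorem isBistable_f (hω : 0 < ω) (hp : 1 < p) (hpq : p < q) : IsBistable (f ω p q) where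
  locallyLipschitz := (contDiff_f hp hpq).locallyLipschitz
  map_zero := by
    rw [f, Real.zero_rpow (one_pos.trans hp).ne', Real.zero_rpow (one_pos.trans (hp.trans hpq)).ne',
      mul_zero, add_zero, sub_zero]
  eventually_neg := eventually_f_neg hω hp
  ordConnected := ordConnected_positivitySet_f hp hpq
  bddAbove := ⟨1, fun _ hx => le_of_not_ge fun h => hx.2.not_gt (f_neg_of_one_le hω hpq h)⟩

end DoublePower

theorem existence_iff_F_pos_general {g : ℝ → ℝ} (hg : IsBistable g) {n : ℕ} (hn : 1 ≤ n) :
    (∃ u : ℝ → ℝ, IsPositiveSolution n g u) ↔ ∃ u : ℝ, 0 < u ∧ 0 < ∫ s in (0 : ℝ)..u, g s := by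
  constructor
  · rintro ⟨u, hu⟩
    exact hu.exists_integral_pos hn hg.locallyLipschitz
  · rintro ⟨x, hx, hF⟩
    obtain ⟨b, c, W⟩ := hg.exists_hasPositivityWindow hx hF
    obtain ⟨m, rfl⟩ := Nat.exists_eq_add_of_le' hn
    exact W.exists_isPositiveSolution hg.locallyLipschitz m

theorem existence_iff_F_pos (ω p q : ℝ) (hω : 0 < ω) (hp : 1 < p) (hpq : p < q)
    (n : ℕ) (hn : 1 ≤ n) :
    (∃ u : ℝ → ℝ, IsPositiveSolution n (f ω p q) u) ↔
      ∃ u : ℝ, 0 < u ∧ 0 < ∫ s in (0:ℝ)..u, f ω p q s :=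
  existence_iff_F_pos_general (isBistable_f hω hp hpq) hn
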